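/- For all n ≥ m ≥ 1, the relations ⊳_{m,n} and ⊲_{m,n} are finite-index congruences on A*: they are equivalence relations with finitely many equivalence classes, and if u ⊳_{m,n} v then for every letter b ∈ A both ub ⊳_{m,n} vb and bu ⊳_{m,n} bv (hence uw ⊳_{m,n} vw and wu ⊳_{m,n} wv for every word w); the same holds for ⊲_{m,n}. -/

import Mathlib

namespace RankerPaper

variable {A : Type*} [DecidableEq A]

/-- Letters of rankers: `X a` ("next `a` to the right") and `Y a` ("next `a` to the left"). -/
inductive RLetter (A : Type*) where
  | X : A → RLetter A
  | Y : A → RLetter A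
  deriving DecidableEq

/-- Least `a`-position of `u` strictly greater than `q` (positions are 1-indexed). -/
def nextOcc (u : List A) (a : A) (q : ℕ) : Option ℕ :=
  ((List.range (u.length + 2)).filter (fun i => decide (q < i ∧ u[i-1]? = some a))).head?

/-- Greatest `a`-position of `u` strictly less than `q` (positions are 1-indexed). -/
def prevOcc (u : List A) (a : A) (q : ℕ) : Option ℕ :=
  ((List.range (u.length + 2)).filter
    (fun i => decide (1 ≤ i ∧ i < q ∧ u[i-1]? = some a))).getLast?

/-- One evaluation step of a ranker letter from position `q`. -/
def stepR (u : List A) : RLetter A → ℕ → Option ℕ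
  | .X a, q => nextOcc u a q
  | .Y a, q => prevOcc u a q

/-- Evaluation of a ranker from position `q`, processing letters left to right. -/
def evalFrom (u : List A) : List (RLetter A) → ℕ → Option ℕ
  | [], q => some q
  | z :: r, q => (stepR u z q).bind (evalFrom u r)

/-- Starting position: `0` for an `X`-letter, `|u|+1` for a `Y`-letter. -/
def startPos (u : List A) : RLetter A → ℕ
  | .X _ => 0
  | .Y _ => u.length + 1

/-- The position `r(u)` defined by the ranker `r` on `u` (`none` if undefined;
empty rankers are considered undefined, rankers being nonempty words). -/
def evalR (u : List A) (r : List (RLetter A)) : Option ℕ :=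
  match r with
  | [] => none
  | z :: t => evalFrom u (z :: t) (startPos u z)

/-- `r` is defined on `u`. -/
def Defined (u : List A) (r : List (RLetter A)) : Prop := (evalR u r).isSome

/-- The position `r(u)` (defaulting to `0` when undefined). -/
def pos (u : List A) (r : List (RLetter A)) : ℕ := (evalR u r).getD 0

/-- Do two ranker letters have the same direction? -/
def sameDir : RLetter A → RLetter A → Bool
  | .X _, .X _ => true
  | .Y _, .Y _ => true
  | _, _ => false

/-- Number of (alternating) blocks of a ranker. -/
def numBlocks : List (RLetter A) → ℕ
  | [] => 0
  | [_] => 1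
  | z :: w :: t => (if sameDir z w then 0 else 1) + numBlocks (w :: t)

def startsX (r : List (RLetter A)) : Prop := ∃ a t, r = RLetter.X a :: t
def startsY (r : List (RLetter A)) : Prop := ∃ a t, r = RLetter.Y a :: t
def endsX (r : List (RLetter A)) : Prop := ∃ a, r.getLast? = some (RLetter.X a)
def endsY (r : List (RLetter A)) : Prop := ∃ a, r.getLast? = some (RLetter.Y a)

/-- `R^X_{m,n}`: rankers with exactly `m` blocks, depth `n`, starting with an `X`-block. -/
def RX (m n : ℕ) (r : List (RLetter A)) : Prop :=
  numBlocks r = m ∧ r.length = n ∧ startsX r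

/-- `R^Y_{m,n}`: rankers with exactly `m` blocks, depth `n`, starting with a `Y`-block. -/
def RY (m n : ℕ) (r : List (RLetter A)) : Prop :=
  numBlocks r = m ∧ r.length = n ∧ startsY r

/-- `uR^X_{m,n}`. -/
def uRX (m n : ℕ) (r : List (RLetter A)) : Prop :=
  (∃ m' n', m' ≤ m ∧ n' ≤ n ∧ RX m' n' r) ∨ (∃ m' n', m' < m ∧ n' < n ∧ RY m' n' r)

/-- `uR^Y_{m,n}`. -/
def uRY (m n : ℕ) (r : List (RLetter A)) : Prop :=
  (∃ m' n', m' ≤ m ∧ n' ≤ n ∧ RY m' n' r) ∨ (∃ m' n', m' < m ∧ n' < n ∧ RX m' n' r)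

/-- `uR_{m,n} = uR^X_{m,n} ∪ uR^Y_{m,n}`. -/
def uR (m n : ℕ) (r : List (RLetter A)) : Prop := uRX m n r ∨ uRY m n r

/-- `uR^X_m = ∪_{n ≥ m} uR^X_{m,n}`. -/
def uRXm (m : ℕ) (r : List (RLetter A)) : Prop := ∃ n, m ≤ n ∧ uRX m n r

/-- `uR^Y_m = ∪_{n ≥ m} uR^Y_{m,n}`. -/
def uRYm (m : ℕ) (r : List (RLetter A)) : Prop := ∃ n, m ≤ n ∧ uRY m n r

/-- `r = Z₁ ⋯ Z_n` is condensed on `u`: it is defined on `u` and there is a chain of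
open intervals `(0;|u|+1) = (i₀;j₀) ⊃ (i₁;j₁) ⊃ ⋯ ⊃ (i_{n-1};j_{n-1}) ∋ r(u)`
updated according to the pairs `Z_ℓ Z_{ℓ+1}`. -/
def Condensed (u : List A) (r : List (RLetter A)) : Prop :=
  ∃ (p : ℕ) (i j : ℕ → ℕ),
    evalR u r = some p ∧
    i 0 = 0 ∧ j 0 = u.length + 1 ∧
    (∀ ℓ a b, 1 ≤ ℓ → r[ℓ-1]? = some (RLetter.X a) → r[ℓ]? = some (RLetter.X b) →
        nextOcc u a (i (ℓ-1)) = some (i ℓ) ∧ j ℓ = j (ℓ-1)) ∧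
    (∀ ℓ a b, 1 ≤ ℓ → r[ℓ-1]? = some (RLetter.Y a) → r[ℓ]? = some (RLetter.Y b) →
        i ℓ = i (ℓ-1) ∧ prevOcc u a (j (ℓ-1)) = some (j ℓ)) ∧
    (∀ ℓ a b, 1 ≤ ℓ → r[ℓ-1]? = some (RLetter.X a) → r[ℓ]? = some (RLetter.Y b) →
        i ℓ = i (ℓ-1) ∧ nextOcc u a (i (ℓ-1)) = some (j ℓ)) ∧
    (∀ ℓ a b, 1 ≤ ℓ → r[ℓ-1]? = some (RLetter.Y a) → r[ℓ]? = some (RLetter.X b) →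
        prevOcc u a (j (ℓ-1)) = some (i ℓ) ∧ j ℓ = j (ℓ-1)) ∧
    (∀ ℓ, 1 ≤ ℓ → ℓ < r.length →
        i (ℓ-1) ≤ i ℓ ∧ j ℓ ≤ j (ℓ-1) ∧ (i (ℓ-1) < i ℓ ∨ j ℓ < j (ℓ-1))) ∧
    i (r.length - 1) < p ∧ p < j (r.length - 1)

/-- `u` and `v` agree on rankers from the set `R`. -/
def AgreeDef (R : List (RLetter A) → Prop) (u v : List A) : Prop :=
  ∀ r, R r → (Defined u r ↔ Defined v r)

/-- `u` and `v` agree on condensed rankers from the set `R`. -/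
def AgreeCond (R : List (RLetter A) → Prop) (u v : List A) : Prop :=
  ∀ r, R r → (Condensed u r ↔ Condensed v r)

/-- `u ⊳_{m,n} v`. -/
def trir (m n : ℕ) (u v : List A) : Prop := AgreeCond (uRX m n) u v

/-- `u ⊲_{m,n} v`. -/
def tril (m n : ℕ) (u v : List A) : Prop := AgreeCond (uRY m n) u v

/-- The alphabet (set of letters) of a word. -/
def alph (u : List A) : Finset A := u.toFinset

/-- Condition (WI 1). -/
def WI1 (m n : ℕ) (u v : List A) : Prop := AgreeDef (uR m n) u v

/-- Condition (WI 2). -/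
def WI2 (m n : ℕ) (u v : List A) : Prop :=
  ∀ r r', uR m n r → uR (m-1) (n-1) r' →
    Defined u r → Defined v r → Defined u r' → Defined v r' →
    compare (pos u r) (pos u r') = compare (pos v r) (pos v r')

/-- Condition (WI 3). -/
def WI3 (m n : ℕ) (u v : List A) : Prop :=
  ∀ r r', uR m n r → uR m (n-1) r' →
    ((endsX r ∧ endsY r') ∨ (endsY r ∧ endsX r')) →
    Defined u r → Defined v r → Defined u r' → Defined v r' →
    compare (pos u r) (pos u r') = compare (pos v r) (pos v r')

/-- Condition (WI 1c). -/
def WI1c (m n : ℕ) (u v : List A) : Prop := AgreeCond (uR m n) u v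

/-- Condition (WI 2c). -/
def WI2c (m n : ℕ) (u v : List A) : Prop :=
  ∀ r r', uR m n r → uR (m-1) (n-1) r' →
    Condensed u r → Condensed v r → Condensed u r' → Condensed v r' →
    compare (pos u r) (pos u r') = compare (pos v r) (pos v r')

/-- Condition (WI 3c). -/
def WI3c (m n : ℕ) (u v : List A) : Prop :=
  ∀ r r', uR m n r → uR m (n-1) r' →
    ((endsX r ∧ endsY r') ∨ (endsY r ∧ endsX r')) →
    Condensed u r → Condensed v r → Condensed u r' → Condensed v r' →
    compare (pos u r) (pos u r') = compare (pos v r) (pos v r')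

/-!
The interval of a condensed ranker `z y t` after its first step is one of the two factors `w₀`, `w₁`
of the splitting `w = w₀ a w₁` at the position of `z`, and `y` decides which one. Hence `z y t` is
condensed on `w` iff `y t` is condensed on `w₁` (if `y` is an `X`-letter) or on `w₀` (if `y` is a
`Y`-letter), and the intervals disappear from the argument.

Splitting `u` and `v` at their first `a`, the relation `u ⊳_{m+1,n+1} v` yields
`u₀ ⊲_{m,n} v₀` and `u₁ ⊳_{m+1,n} v₁`. The delicate part is the rankers in `uR^Y_{m,n}` that begin
with an `X`-block, since putting `X_a` in front of them sends them into `u₁` instead of `u₀`. Such a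
ranker is condensed on the prefix `u₀` of `u` iff it is condensed on `u` and the letters of its
leading `X`-block form a subword of `u₀`; the subword condition is also tested by one `Y`-block.

Adding a letter at one end of `u` and `v` changes only one of the two factors, or creates a new
splitting when `a` is the added letter, so compatibility with letters follows by induction on `n`;
word reversal exchanges `⊳` and `⊲`. The index is finite because there are only finitely many
rankers of depth at most `n`.
-/

namespace RLetter

variable {α β : Type*}

/-- The letter `a` of the ranker letters `X a` and `Y a`. -/
def letter : RLetter α → α
  | X a => a
  | Y a => a

/-- The ranker letter with the opposite direction; with word reversal it gives the left-right
duality between `⊳` and `⊲`. -/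
def swap : RLetter α → RLetter α
  | X a => Y a
  | Y a => X a

/-- The endpoint of the open interval `I = (i; j)` from which a ranker letter starts searching
inside `I`. -/
def entry : RLetter α → ℕ × ℕ → ℕ
  | X _, I => I.1
  | Y _, I => I.2

/-- The part of the open interval `I` on which a ranker letter acts after a step to position `k`:
`(k; j)` for an `X`-letter and `(i; k)` for a `Y`-letter. The four update rules in the definition
of condensed rankers are `I ↦ y.narrow I k`, where `y` is the letter *following* the one that
leads to `k`. -/
def narrow : RLetter α → ℕ × ℕ → ℕ → ℕ × ℕ
  | X _, I, k => (k, I.2)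
  | Y _, I, k => (I.1, k)

/-- The right component for an `X`-letter and the left component for a `Y`-letter; it is the
counterpart of `narrow` for a word cut into a left and a right factor. -/
def side : RLetter α → β → β → β
  | X _, _, x => x
  | Y _, x, _ => x

@[simp]
theorem letter_swap (z : RLetter α) : z.swap.letter = z.letter := by cases z <;> rfl

@[simp]
theorem swap_swap (z : RLetter α) : z.swap.swap = z := by cases z <;> rfl

theorem narrow_add (z : RLetter α) (I : ℕ × ℕ) (k c : ℕ) :
    z.narrow (I.1 + c, I.2 + c) (k + c) = ((z.narrow I k).1 + c, (z.narrow I k).2 + c) := by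
  cases z <;> rfl

theorem narrow_mono (z : RLetter α) {I : ℕ × ℕ} {k : ℕ} (hk : k ∈ Set.Ioo I.1 I.2) :
    I.1 ≤ (z.narrow I k).1 ∧ (z.narrow I k).2 ≤ I.2 := by
  cases z
  · exact ⟨hk.1.le, le_rfl⟩
  · exact ⟨le_rfl, hk.2.le⟩

theorem swap_side_reverse (z : RLetter α) (x y : List β) :
    z.swap.side y.reverse x.reverse = (z.side x y).reverse := by
  cases z <;> rfl

end RLetter

/-! ### Blocks and depth -/

section Rankers

variable {α : Type*}

/-- The letters of the leading `X`-block of a ranker. -/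
def leadingX : List (RLetter α) → List α
  | RLetter.X a :: t => a :: leadingX t
  | _ => []

theorem length_leadingX_le (r : List (RLetter α)) : (leadingX r).length ≤ r.length := by
  match r with
  | [] => exact le_rfl
  | RLetter.X _ :: t => exact Nat.succ_le_succ (length_leadingX_le t)
  | RLetter.Y _ :: t => exact Nat.zero_le _

theorem numBlocks_map_of_sameDir {f : α → RLetter α} (hf : ∀ a b, sameDir (f a) (f b) = true)
    {l : List α} (hl : l ≠ []) : numBlocks (l.map f) = 1 := by
  match l with
  | [a] => rfl
  | a :: b :: l =>
    simpa [numBlocks, hf] using numBlocks_map_of_sameDir hf (List.cons_ne_nil b l)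

theorem numBlocks_pos {r : List (RLetter α)} (hr : r ≠ []) : 0 < numBlocks r := by
  match r with
  | [_] => exact Nat.one_pos
  | _ :: y :: t => exact Nat.add_pos_right _ (numBlocks_pos (List.cons_ne_nil y t))

theorem numBlocks_X_cons_X (a b : α) (t : List (RLetter α)) :
    numBlocks (RLetter.X a :: RLetter.X b :: t) = numBlocks (RLetter.X b :: t) := by
  simp [numBlocks, sameDir]

theorem numBlocks_X_cons_Y (a b : α) (t : List (RLetter α)) :
    numBlocks (RLetter.X a :: RLetter.Y b :: t) = numBlocks (RLetter.Y b :: t) + 1 := by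
  simp [numBlocks, sameDir, Nat.add_comm]

/-- The `X`-rankers with at most `m` blocks and depth at most `n`: the part of `uR^X_{m,n}` that
starts with an `X`-block. -/
def BoundedX (m n : ℕ) (r : List (RLetter α)) : Prop :=
  startsX r ∧ numBlocks r ≤ m ∧ r.length ≤ n

/-- The `Y`-rankers with at most `m` blocks and depth at most `n`: the part of `uR^Y_{m,n}` that
starts with a `Y`-block. -/
def BoundedY (m n : ℕ) (r : List (RLetter α)) : Prop :=
  startsY r ∧ numBlocks r ≤ m ∧ r.length ≤ n

theorem uRX_iff {m n : ℕ} {r : List (RLetter α)} :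
    uRX m n r ↔ BoundedX m n r ∨ startsY r ∧ numBlocks r < m ∧ r.length < n := by
  unfold uRX RX RY BoundedX
  grind

theorem uRY_iff {m n : ℕ} {r : List (RLetter α)} :
    uRY m n r ↔ BoundedY m n r ∨ startsX r ∧ numBlocks r < m ∧ r.length < n := by
  unfold uRY RX RY BoundedY
  grind

theorem uRX_succ_succ_iff {m n : ℕ} {r : List (RLetter α)} :
    uRX (m + 1) (n + 1) r ↔ BoundedX (m + 1) (n + 1) r ∨ uRY m n r := by
  rw [uRX_iff, uRY_iff]
  unfold BoundedX BoundedY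
  grind

theorem uRX_pos {m n : ℕ} {r : List (RLetter α)} (h : uRX m n r) : 0 < m ∧ 0 < n := by
  have hr : r ≠ [] := by
    rcases uRX_iff.1 h with ⟨⟨a, t, rfl⟩, -⟩ | ⟨⟨a, t, rfl⟩, -⟩ <;> exact List.cons_ne_nil _ _
  have hblocks := numBlocks_pos hr
  have hlength := List.length_pos_iff.2 hr
  rcases uRX_iff.1 h with ⟨-, hm, hn⟩ | ⟨-, hm, hn⟩ <;> omega

theorem sameDir_swap (z y : RLetter α) : sameDir z.swap y.swap = sameDir z y := by
  cases z <;> cases y <;> rfl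

theorem numBlocks_map_swap (r : List (RLetter α)) :
    numBlocks (r.map RLetter.swap) = numBlocks r := by
  match r with
  | [] => rfl
  | [_] => rfl
  | z :: y :: t =>
    change (if sameDir z.swap y.swap then 0 else 1) + numBlocks ((y :: t).map RLetter.swap) = _
    rw [sameDir_swap, numBlocks_map_swap (y :: t), numBlocks]

theorem startsX_map_swap {r : List (RLetter α)} : startsX (r.map RLetter.swap) ↔ startsY r := by
  rcases r with _ | ⟨_ | _, _⟩ <;> simp [startsX, startsY, RLetter.swap]

theorem startsY_map_swap {r : List (RLetter α)} : startsY (r.map RLetter.swap) ↔ startsX r := by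
  rcases r with _ | ⟨_ | _, _⟩ <;> simp [startsX, startsY, RLetter.swap]

theorem uRX_map_swap {m n : ℕ} {r : List (RLetter α)} :
    uRX m n (r.map RLetter.swap) ↔ uRY m n r := by
  simp only [uRX, uRY, RX, RY, numBlocks_map_swap, List.length_map, startsX_map_swap,
    startsY_map_swap]

theorem boundedX_map_swap {m n : ℕ} {r : List (RLetter α)} :
    BoundedX m n (r.map RLetter.swap) ↔ BoundedY m n r := by
  simp only [BoundedX, BoundedY, startsX_map_swap, numBlocks_map_swap, List.length_map]

theorem length_le_of_uRX {m n : ℕ} {r : List (RLetter α)} (h : uRX m n r) : r.length ≤ n := by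
  rcases uRX_iff.1 h with ⟨-, -, hn⟩ | ⟨-, -, hn⟩
  · exact hn
  · exact hn.le

theorem length_le_of_uRY {m n : ℕ} {r : List (RLetter α)} (h : uRY m n r) : r.length ≤ n := by
  rw [← uRX_map_swap] at h
  simpa using length_le_of_uRX h

end Rankers

theorem getElem?_append_append {α : Type*} {p w s : List α} {i : ℕ} (hi : 1 ≤ i)
    (hiw : i ≤ w.length) : (p ++ (w ++ s))[i + p.length - 1]? = w[i - 1]? := by
  rw [List.getElem?_append_right (by omega), List.getElem?_append_left (by omega)]
  congr 1
  omega

theorem nextOcc_eq_some_iff {u : List A} {a : A} {q k : ℕ} :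
    nextOcc u a q = some k ↔
      q < k ∧ u[k - 1]? = some a ∧ ∀ i, q < i → i < k → u[i - 1]? ≠ some a := by
  rw [nextOcc, List.head?_filter, List.find?_range_eq_some]
  simp only [decide_eq_true_eq, List.mem_range, Bool.not_eq_true', decide_eq_false_iff_not, not_and]
  constructor
  · rintro ⟨⟨hqk, hk⟩, -, hmin⟩
    exact ⟨hqk, hk, fun i hqi hik => hmin i hik hqi⟩
  · rintro ⟨hqk, hk, hmin⟩
    have hlt := (List.getElem?_eq_some_iff.1 hk).1
    exact ⟨⟨hqk, hk⟩, by omega, fun i hik hqi => hmin i hqi hik⟩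

theorem find?_reverse_range_eq_some {p : ℕ → Bool} {n k : ℕ} :
    (List.range n).reverse.find? p = some k ↔
      p k = true ∧ k < n ∧ ∀ i, k < i → i < n → p i = false := by
  induction n with
  | zero => simp
  | succ n ih =>
    rw [List.range_succ, List.reverse_append, List.reverse_singleton, List.singleton_append,
      List.find?_cons]
    cases hn : p n <;> grind

theorem prevOcc_eq_some_iff {u : List A} {a : A} {q k : ℕ} :
    prevOcc u a q = some k ↔
      1 ≤ k ∧ k < q ∧ u[k - 1]? = some a ∧ ∀ i, k < i → i < q → u[i - 1]? ≠ some a := by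
  rw [prevOcc, List.getLast?_filter, find?_reverse_range_eq_some]
  simp only [decide_eq_true_eq, decide_eq_false_iff_not, not_and]
  constructor
  · rintro ⟨⟨hk1, hkq, hk⟩, -, hmax⟩
    refine ⟨hk1, hkq, hk, fun i hki hiq hi => hmax i hki ?_ (by omega) hiq hi⟩
    have hlt := (List.getElem?_eq_some_iff.1 hi).1
    omega
  · rintro ⟨hk1, hkq, hk, hmax⟩
    have hlt := (List.getElem?_eq_some_iff.1 hk).1
    exact ⟨⟨hk1, hkq, hk⟩, by omega, fun i hki _ _ hiq => hmax i hki hiq⟩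

/- The positions passed over by a step of `z` from an end of `I` to `k` form the interval
`z.swap.narrow I k`. -/
theorem stepR_entry_eq_some_iff {u : List A} {z : RLetter A} {I : ℕ × ℕ} {k : ℕ}
    (hk : k ∈ Set.Ioo I.1 I.2) :
    stepR u z (z.entry I) = some k ↔
      u[k - 1]? = some z.letter ∧
        ∀ i ∈ Set.Ioo (z.swap.narrow I k).1 (z.swap.narrow I k).2, u[i - 1]? ≠ some z.letter := by
  obtain ⟨hlo, hhi⟩ := hk
  cases z with
  | X a =>
    change nextOcc u a I.1 = some k ↔ _
    simp [nextOcc_eq_some_iff, RLetter.letter, RLetter.swap, RLetter.narrow, hlo]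
  | Y a =>
    change prevOcc u a I.2 = some k ↔ _
    simp [prevOcc_eq_some_iff, RLetter.letter, RLetter.swap, RLetter.narrow, hhi,
      Nat.one_le_of_lt hlo]

theorem letter_mem_of_stepR {u : List A} {z : RLetter A} {q k : ℕ} (h : stepR u z q = some k) :
    z.letter ∈ u := by
  cases z with
  | X a => exact List.mem_of_getElem? (nextOcc_eq_some_iff.1 h).2.1
  | Y a => exact List.mem_of_getElem? (prevOcc_eq_some_iff.1 h).2.2.1

theorem stepR_append_append {p w s : List A} {z : RLetter A} {I : ℕ × ℕ} {k : ℕ}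
    (hI : I.2 ≤ w.length + 1) (hk : k ∈ Set.Ioo I.1 I.2) :
    stepR (p ++ (w ++ s)) z (z.entry (I.1 + p.length, I.2 + p.length)) = some (k + p.length) ↔
      stepR w z (z.entry I) = some k := by
  have hshift : ∀ i ∈ Set.Ioo I.1 I.2, (p ++ (w ++ s))[i + p.length - 1]? = w[i - 1]? :=
    fun i hi => getElem?_append_append (Nat.one_le_of_lt hi.1) (by have := hi.2; omega)
  have hgap := z.swap.narrow_mono hk
  rw [stepR_entry_eq_some_iff hk, stepR_entry_eq_some_iff (by simpa using hk), hshift k hk,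
    RLetter.narrow_add]
  refine and_congr_right fun _ => ⟨fun h i hi => ?_, fun h i hi => ?_⟩
  · rw [← hshift i ⟨hgap.1.trans_lt hi.1, hi.2.trans_le hgap.2⟩]
    exact h _ (by simpa using hi)
  · obtain ⟨i, rfl⟩ := Nat.exists_eq_add_of_le' (show p.length ≤ i by have := hi.1; omega)
    have hgap_i : i ∈ Set.Ioo (z.swap.narrow I k).1 (z.swap.narrow I k).2 := by simpa using hi
    rw [hshift i ⟨hgap.1.trans_lt hgap_i.1, hgap_i.2.trans_le hgap.2⟩]
    exact h i hgap_i

/-! ### Condensed rankers, recursively -/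

/-- The ranker `z t` is condensed on `u` inside the open interval `I`: each letter leads to a
position of the current interval, which is then narrowed in the direction of the next letter. -/
def CondensedIn (u : List A) : RLetter A → List (RLetter A) → ℕ × ℕ → Prop
  | z, [], I => ∃ k ∈ Set.Ioo I.1 I.2, stepR u z (z.entry I) = some k
  | z, y :: t, I => ∃ k ∈ Set.Ioo I.1 I.2, stepR u z (z.entry I) = some k ∧
      CondensedIn u y t (y.narrow I k)

/-- The conditions on the intervals `I ℓ = (i_ℓ; j_ℓ)` in the definition of condensed rankers,
with the four update rules merged into one by means of `RLetter.narrow`. -/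
structure IntervalChain (u : List A) (r : List (RLetter A)) (I : ℕ → ℕ × ℕ) : Prop where
  update : ∀ ℓ z y, r[ℓ]? = some z → r[ℓ + 1]? = some y →
    ∃ k, stepR u z (z.entry (I ℓ)) = some k ∧ I (ℓ + 1) = y.narrow (I ℓ) k
  nested : ∀ ℓ, ℓ + 1 < r.length → (I ℓ).1 ≤ (I (ℓ + 1)).1 ∧ (I (ℓ + 1)).2 ≤ (I ℓ).2 ∧
    ((I ℓ).1 < (I (ℓ + 1)).1 ∨ (I (ℓ + 1)).2 < (I ℓ).2)

theorem IntervalChain.tail {u : List A} {z : RLetter A} {t : List (RLetter A)} {I : ℕ → ℕ × ℕ}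
    (h : IntervalChain u (z :: t) I) : IntervalChain u t fun ℓ => I (ℓ + 1) :=
  ⟨fun ℓ x y hx hy => h.update (ℓ + 1) x y hx hy, fun ℓ hℓ => h.nested (ℓ + 1) (by simpa using hℓ)⟩

theorem IntervalChain.cons {u : List A} {z y : RLetter A} {t : List (RLetter A)} {k : ℕ}
    {I : ℕ × ℕ} {J : ℕ → ℕ × ℕ} (hJ : IntervalChain u (y :: t) J)
    (hstep : stepR u z (z.entry I) = some k) (hk : k ∈ Set.Ioo I.1 I.2)
    (hJ0 : J 0 = y.narrow I k) : IntervalChain u (z :: y :: t) fun ℓ => Nat.casesOn ℓ I J := by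
  constructor
  · rintro (_ | ℓ) x w hx hw
    · obtain ⟨rfl, rfl⟩ : z = x ∧ y = w := by simpa using And.intro hx hw
      exact ⟨k, hstep, hJ0⟩
    · exact hJ.update ℓ x w hx hw
  · rintro (_ | ℓ) hℓ
    · change I.1 ≤ (J 0).1 ∧ (J 0).2 ≤ I.2 ∧ (I.1 < (J 0).1 ∨ (J 0).2 < I.2)
      obtain ⟨hlo, hhi⟩ := hk
      cases y <;> simp only [hJ0, RLetter.narrow] <;> omega
    · exact hJ.nested ℓ (by simpa using hℓ)

theorem CondensedIn.lt {u : List A} {z : RLetter A} {t : List (RLetter A)} {I : ℕ × ℕ}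
    (h : CondensedIn u z t I) : I.1 < I.2 := by
  cases t with
  | nil => obtain ⟨k, hk, -⟩ := h; exact hk.1.trans hk.2
  | cons y t => obtain ⟨k, hk, -, -⟩ := h; exact hk.1.trans hk.2

theorem condensedIn_of_intervalChain {u : List A} {z : RLetter A} {t : List (RLetter A)} {p : ℕ}
    {I : ℕ → ℕ × ℕ} (hp : evalFrom u (z :: t) (z.entry (I 0)) = some p)
    (hI : IntervalChain u (z :: t) I) (hmem : p ∈ Set.Ioo (I t.length).1 (I t.length).2) :
    CondensedIn u z t (I 0) := by
  induction t generalizing z I with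
  | nil => exact ⟨p, hmem, by simpa [evalFrom] using hp⟩
  | cons y t ih =>
    obtain ⟨k, hstep, hI1⟩ := hI.update 0 z y rfl rfl
    have hentry : y.entry (I 1) = k := by rw [hI1]; cases y <;> rfl
    have hrest : CondensedIn u y t (I 1) := by
      refine ih (I := fun ℓ => I (ℓ + 1)) ?_ hI.tail hmem
      simpa only [evalFrom, hstep, Option.bind_some, hentry] using hp
    have hk : k ∈ Set.Ioo (I 0).1 (I 0).2 := by
      have hlt := hrest.lt
      have hnested := hI.nested 0 (by simp)
      rw [Set.mem_Ioo]
      cases y <;> simp only [hI1, RLetter.narrow] at hlt hnested <;> omega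
    exact ⟨k, hk, hstep, hI1 ▸ hrest⟩

theorem exists_intervalChain_of_condensedIn {u : List A} {z : RLetter A} {t : List (RLetter A)}
    {I₀ : ℕ × ℕ} (h : CondensedIn u z t I₀) :
    ∃ (p : ℕ) (I : ℕ → ℕ × ℕ), evalFrom u (z :: t) (z.entry I₀) = some p ∧ I 0 = I₀ ∧
      IntervalChain u (z :: t) I ∧ p ∈ Set.Ioo (I t.length).1 (I t.length).2 := by
  induction t generalizing z I₀ with
  | nil =>
    obtain ⟨k, hk, hstep⟩ := h
    exact ⟨k, fun _ => I₀, by simp [evalFrom, hstep], rfl, ⟨by simp, by simp⟩, hk⟩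
  | cons y t ih =>
    obtain ⟨k, hk, hstep, hrest⟩ := h
    obtain ⟨p, J, hp, hJ0, hJ, hmem⟩ := ih hrest
    have hentry : y.entry (y.narrow I₀ k) = k := by cases y <;> rfl
    refine ⟨p, fun ℓ => Nat.casesOn ℓ I₀ J, ?_, rfl, hJ.cons hstep hk hJ0, hmem⟩
    rw [hentry] at hp
    rwa [evalFrom, hstep]

theorem condensed_cons_iff_exists_intervalChain {u : List A} {z : RLetter A}
    {t : List (RLetter A)} :
    Condensed u (z :: t) ↔ ∃ (p : ℕ) (I : ℕ → ℕ × ℕ),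
      evalFrom u (z :: t) (z.entry (0, u.length + 1)) = some p ∧ I 0 = (0, u.length + 1) ∧
        IntervalChain u (z :: t) I ∧ p ∈ Set.Ioo (I t.length).1 (I t.length).2 := by
  have hstart : startPos u z = z.entry (0, u.length + 1) := by cases z <;> rfl
  constructor
  · rintro ⟨p, i, j, hp, hi0, hj0, hXX, hYY, hXY, hYX, hnested, hlo, hhi⟩
    refine ⟨p, fun ℓ => (i ℓ, j ℓ), by rwa [evalR, hstart] at hp, by simp only [hi0, hj0],
      ⟨fun ℓ x y hx hy => ?_, fun ℓ hℓ => hnested (ℓ + 1) (by omega) hℓ⟩, hlo, hhi⟩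
    cases x <;> cases y
    · exact ⟨_, (hXX (ℓ + 1) _ _ (by omega) hx hy).1,
        congrArg _ (hXX (ℓ + 1) _ _ (by omega) hx hy).2⟩
    · exact ⟨_, (hXY (ℓ + 1) _ _ (by omega) hx hy).2,
        congrArg (·, _) (hXY (ℓ + 1) _ _ (by omega) hx hy).1⟩
    · exact ⟨_, (hYX (ℓ + 1) _ _ (by omega) hx hy).1,
        congrArg _ (hYX (ℓ + 1) _ _ (by omega) hx hy).2⟩
    · exact ⟨_, (hYY (ℓ + 1) _ _ (by omega) hx hy).2,
        congrArg (·, _) (hYY (ℓ + 1) _ _ (by omega) hx hy).1⟩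
  · rintro ⟨p, I, hp, hI0, hI, hlo, hhi⟩
    refine ⟨p, fun ℓ => (I ℓ).1, fun ℓ => (I ℓ).2, by rw [evalR, hstart]; exact hp,
      congrArg Prod.fst hI0, congrArg Prod.snd hI0, ?updateXX, ?updateYY, ?updateXY, ?updateYX,
      ?nested, hlo, hhi⟩
    case nested =>
      rintro (_ | ℓ) hpos hℓ
      · omega
      · exact hI.nested ℓ hℓ
    all_goals
      rintro (_ | ℓ) a b hpos ha hb
      · omega
      obtain ⟨k, hk, hnarrow⟩ := hI.update ℓ _ _ ha hb
      simpa [hnarrow, RLetter.narrow, RLetter.entry, stepR] using hk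

theorem condensed_cons_iff_condensedIn {u : List A} {z : RLetter A} {t : List (RLetter A)} :
    Condensed u (z :: t) ↔ CondensedIn u z t (0, u.length + 1) := by
  rw [condensed_cons_iff_exists_intervalChain]
  constructor
  · rintro ⟨p, I, hp, hI0, hI, hmem⟩
    exact hI0 ▸ condensedIn_of_intervalChain (hI0.symm ▸ hp) hI hmem
  · exact exists_intervalChain_of_condensedIn

theorem condensedIn_append_append {p w s : List A} {z : RLetter A} {t : List (RLetter A)}
    {I : ℕ × ℕ} (hI : I.2 ≤ w.length + 1) :
    CondensedIn (p ++ (w ++ s)) z t (I.1 + p.length, I.2 + p.length) ↔ CondensedIn w z t I := by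
  induction t generalizing z I with
  | nil =>
    rw [CondensedIn, CondensedIn, ← Set.image_add_const_Ioo, Set.exists_mem_image]
    exact exists_congr fun k => and_congr_right fun hk => stepR_append_append hI hk
  | cons y t ih =>
    rw [CondensedIn, CondensedIn, ← Set.image_add_const_Ioo, Set.exists_mem_image]
    refine exists_congr fun k => and_congr_right fun hk => and_congr (stepR_append_append hI hk) ?_
    rw [RLetter.narrow_add]
    exact ih ((y.narrow_mono hk).2.trans hI)

/-! ### Splitting a word at its first or last `a` -/

section Splits

variable {α : Type*}

/-- The factorization `w = w₀ a w₁` at the first `a` if `z = X a`, and at the last `a` if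
`z = Y a`: the position reached by the one-letter ranker `z`. -/
structure SplitsAt (z : RLetter α) (w w₀ w₁ : List α) : Prop where
  eq : w = w₀ ++ z.letter :: w₁
  notMem : z.letter ∉ z.swap.side w₀ w₁

theorem SplitsAt.mem {z : RLetter α} {w w₀ w₁ : List α} (h : SplitsAt z w w₀ w₁) :
    z.letter ∈ w := by
  rw [h.eq]
  exact List.mem_append_right _ List.mem_cons_self

theorem SplitsAt.reverse {z : RLetter α} {w w₀ w₁ : List α} (h : SplitsAt z w w₀ w₁) :
    SplitsAt z.swap w.reverse w₁.reverse w₀.reverse := by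
  refine ⟨by simp [h.eq], ?_⟩
  rw [RLetter.letter_swap, RLetter.swap_side_reverse, List.mem_reverse]
  exact h.notMem

theorem exists_splitsAt {z : RLetter α} {w : List α} (h : z.letter ∈ w) :
    ∃ w₀ w₁, SplitsAt z w w₀ w₁ := by
  have hX {a : α} {x : List α} (ha : a ∈ x) : ∃ x₀ x₁, SplitsAt (RLetter.X a) x x₀ x₁ :=
    let ⟨x₀, x₁, hx, hnot⟩ := List.eq_append_cons_of_mem ha
    ⟨x₀, x₁, hx, hnot⟩
  cases z with
  | X a => exact hX h
  | Y a =>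
    obtain ⟨x₀, x₁, hx⟩ := hX (List.mem_reverse.2 h)
    exact ⟨x₁.reverse, x₀.reverse, w.reverse_reverse ▸ hx.reverse⟩

theorem SplitsAt.append_right {a : α} {w w₀ w₁ : List α} (h : SplitsAt (RLetter.X a) w w₀ w₁)
    (s : List α) : SplitsAt (RLetter.X a) (w ++ s) w₀ (w₁ ++ s) :=
  ⟨by simp [h.eq], h.notMem⟩

theorem SplitsAt.cons {a b : α} {w w₀ w₁ : List α} (h : SplitsAt (RLetter.X a) w w₀ w₁)
    (hab : a ≠ b) : SplitsAt (RLetter.X a) (b :: w) (b :: w₀) w₁ :=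
  ⟨congrArg (List.cons b) h.eq, List.not_mem_cons_of_ne_of_not_mem hab h.notMem⟩

theorem SplitsAt.cons_sublist_iff {a : α} {w w₀ w₁ l : List α}
    (h : SplitsAt (RLetter.X a) w w₀ w₁) : (a :: l).Sublist w ↔ l.Sublist w₁ := by
  obtain ⟨rfl, hnot⟩ := h
  change a ∉ w₀ at hnot
  induction w₀ with
  | nil => exact List.cons_sublist_cons
  | cons b w₀ ih =>
    rw [List.mem_cons, not_or] at hnot
    rw [List.cons_append, List.cons_sublist_cons']
    simpa [hnot.1] using ih hnot.2

theorem SplitsAt.stepR_eq {z : RLetter A} {w w₀ w₁ : List A} (h : SplitsAt z w w₀ w₁) :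
    stepR w z (z.entry (0, w.length + 1)) = some (w₀.length + 1) := by
  obtain ⟨rfl, hnot⟩ := h
  rw [stepR_entry_eq_some_iff (by simp)]
  refine ⟨by simp, fun i hi hget => hnot ?_⟩
  cases z with
  | X a =>
    obtain ⟨hpos, hlt⟩ : 0 < i ∧ i < w₀.length + 1 := hi
    rw [List.getElem?_append_left (by omega)] at hget
    exact List.mem_of_getElem? hget
  | Y a =>
    have hlt : w₀.length + 1 < i := hi.1
    rw [List.getElem?_append_right (by omega), List.getElem?_cons, if_neg (by omega)] at hget
    exact List.mem_of_getElem? hget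

end Splits

theorem not_condensed_nil {w : List A} : ¬Condensed w [] := by
  rintro ⟨p, i, j, hp, -⟩
  simp [evalR] at hp

theorem letter_mem_of_condensed {w : List A} {z : RLetter A} {t : List (RLetter A)}
    (h : Condensed w (z :: t)) : z.letter ∈ w := by
  rw [condensed_cons_iff_condensedIn] at h
  cases t with
  | nil => obtain ⟨k, -, hk⟩ := h; exact letter_mem_of_stepR hk
  | cons y t => obtain ⟨k, -, hk, -⟩ := h; exact letter_mem_of_stepR hk

theorem condensed_singleton_iff {w : List A} {z : RLetter A} :
    Condensed w [z] ↔ z.letter ∈ w := by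
  refine ⟨letter_mem_of_condensed, fun h => ?_⟩
  obtain ⟨w₀, w₁, hw⟩ := exists_splitsAt h
  refine condensed_cons_iff_condensedIn.2 ⟨_, ?_, hw.stepR_eq⟩
  simp [hw.eq]

theorem condensed_cons_cons_iff {w w₀ w₁ : List A} {z y : RLetter A} {t : List (RLetter A)}
    (h : SplitsAt z w w₀ w₁) :
    Condensed w (z :: y :: t) ↔ Condensed (y.side w₀ w₁) (y :: t) := by
  have hstep : Condensed w (z :: y :: t) ↔
      CondensedIn w y t (y.narrow (0, w.length + 1) (w₀.length + 1)) := by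
    rw [condensed_cons_iff_condensedIn, CondensedIn, h.stepR_eq]
    simp [h.eq]
  rw [hstep, condensed_cons_iff_condensedIn, h.eq]
  cases y with
  | X b =>
    have hword : w₀ ++ z.letter :: w₁ = (w₀ ++ [z.letter]) ++ (w₁ ++ []) := by simp
    have hinterval :
        (RLetter.X b).narrow (0, (w₀ ++ z.letter :: w₁).length + 1) (w₀.length + 1) =
          (0 + (w₀ ++ [z.letter]).length, w₁.length + 1 + (w₀ ++ [z.letter]).length) := by
      simp only [RLetter.narrow, List.length_append, List.length_cons, List.length_nil,
        Prod.mk.injEq]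
      omega
    rw [hinterval, hword]
    exact condensedIn_append_append (I := (0, w₁.length + 1)) le_rfl
  | Y b =>
    exact condensedIn_append_append (p := []) (w := w₀) (I := (0, w₀.length + 1)) le_rfl

/-! ### Left-right duality -/

theorem condensed_map_swap_reverse {w : List A} {r : List (RLetter A)} :
    Condensed w.reverse (r.map RLetter.swap) ↔ Condensed w r := by
  cases r with
  | nil => exact iff_of_false not_condensed_nil not_condensed_nil
  | cons z t =>
    induction t generalizing z w with
    | nil =>
      rw [List.map_singleton, condensed_singleton_iff, condensed_singleton_iff,
        RLetter.letter_swap, List.mem_reverse]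
    | cons y t ih =>
      by_cases hz : z.letter ∈ w
      · obtain ⟨w₀, w₁, hw⟩ := exists_splitsAt hz
        rw [condensed_cons_cons_iff hw, ← ih, ← RLetter.swap_side_reverse]
        exact condensed_cons_cons_iff hw.reverse
      · refine iff_of_false (fun h => hz ?_) (mt letter_mem_of_condensed hz)
        simpa using letter_mem_of_condensed h

theorem trir_reverse {m n : ℕ} {u v : List A} :
    trir m n u.reverse v.reverse ↔ tril m n u v := by
  have hsurj : Function.Surjective (List.map (RLetter.swap (α := A))) :=
    Function.Involutive.surjective fun r => by simp [Function.comp_def]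
  refine hsurj.forall.trans (forall_congr' fun r => ?_)
  rw [uRX_map_swap, condensed_map_swap_reverse, condensed_map_swap_reverse]

theorem tril_reverse {m n : ℕ} {u v : List A} :
    tril m n u.reverse v.reverse ↔ trir m n u v := by
  rw [← trir_reverse, List.reverse_reverse, List.reverse_reverse]

/-! ### Leading blocks and subwords -/

/- Once the leading block has been read, a condensed ranker stays to the left of the position it
has reached, so only that block can lead out of the prefix `w`. -/
theorem condensed_iff_condensed_append {w s : List A} {r : List (RLetter A)} (hr : startsX r) :
    Condensed w r ↔ Condensed (w ++ s) r ∧ (leadingX r).Sublist w := by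
  obtain ⟨a, t, rfl⟩ := hr
  induction t generalizing a w with
  | nil =>
    rw [condensed_singleton_iff, condensed_singleton_iff]
    exact ⟨fun ha => ⟨List.mem_append_left s ha, List.singleton_sublist.2 ha⟩,
      fun h => List.singleton_sublist.1 h.2⟩
  | cons y t ih =>
    by_cases ha : a ∈ w
    · obtain ⟨w₀, w₁, hw⟩ := exists_splitsAt (z := RLetter.X a) ha
      rw [condensed_cons_cons_iff hw, condensed_cons_cons_iff (hw.append_right s), leadingX,
        hw.cons_sublist_iff]
      cases y with
      | X b => exact ih b
      | Y b => simp [leadingX, RLetter.side]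
    · exact iff_of_false (mt letter_mem_of_condensed ha)
        fun h => ha (h.2.subset List.mem_cons_self)

theorem condensed_map_X_iff {w l : List A} (hl : l ≠ []) :
    Condensed w (l.map RLetter.X) ↔ l.Sublist w := by
  obtain ⟨a, l, rfl⟩ := List.exists_cons_of_ne_nil hl
  induction l generalizing a w with
  | nil => simp [condensed_singleton_iff, RLetter.letter]
  | cons b l ih =>
    by_cases ha : a ∈ w
    · obtain ⟨w₀, w₁, hw⟩ := exists_splitsAt (z := RLetter.X a) ha
      rw [hw.cons_sublist_iff, ← ih b (List.cons_ne_nil _ _)]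
      exact condensed_cons_cons_iff hw
    · exact iff_of_false (mt letter_mem_of_condensed ha) fun h => ha (h.subset List.mem_cons_self)

theorem condensed_map_Y_iff {w l : List A} (hl : l ≠ []) :
    Condensed w (l.map RLetter.Y) ↔ l.reverse.Sublist w := by
  rw [← condensed_map_swap_reverse, List.map_map, ← List.reverse_sublist, List.reverse_reverse]
  exact condensed_map_X_iff hl

/-! ### The relations `⊳` and `⊲` -/

theorem trir_succ_succ_iff {m n : ℕ} {u v : List A} :
    trir (m + 1) (n + 1) u v ↔ AgreeCond (BoundedX (m + 1) (n + 1)) u v ∧ tril m n u v := by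
  simp only [trir, tril, AgreeCond, uRX_succ_succ_iff, or_imp, forall_and]

theorem trir_zero_left (n : ℕ) (u v : List A) : trir 0 n u v :=
  fun _ hr => absurd (uRX_pos hr).1 (Nat.lt_irrefl 0)

theorem trir_zero_right (m : ℕ) (u v : List A) : trir m 0 u v :=
  fun _ hr => absurd (uRX_pos hr).2 (Nat.lt_irrefl 0)

theorem trir_of_le {m n n' : ℕ} (hn : n ≤ n') {u v : List A} (h : trir m n' u v) :
    trir m n u v := by
  refine fun r hr => h r (uRX_iff.2 ?_)
  rcases uRX_iff.1 hr with ⟨hX, hm, hlen⟩ | ⟨hY, hm, hlen⟩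
  · exact Or.inl ⟨hX, hm, hlen.trans hn⟩
  · exact Or.inr ⟨hY, hm, hlen.trans_le hn⟩

/- A leading `X`-block fits into a prefix iff its letters form a subword of that prefix, and this is
also expressed by a single `Y`-block. -/
theorem tril_of_append {m n : ℕ} {u v s s' : List A} (hY : AgreeCond (BoundedY m n) u v)
    (h : tril m n (u ++ s) (v ++ s')) : tril m n u v := by
  intro r hr
  rcases uRY_iff.1 hr with hrY | ⟨hX, hm, hn⟩
  · exact hY r hrY
  have hlead : leadingX r ≠ [] := by
    obtain ⟨a, t, rfl⟩ := hX
    exact List.cons_ne_nil _ _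
  have hsub : (leadingX r).Sublist u ↔ (leadingX r).Sublist v := by
    have hne : (leadingX r).reverse ≠ [] := by simpa using hlead
    have hblock := hY ((leadingX r).reverse.map RLetter.Y) <| by
      refine ⟨?_, ?_, ?_⟩
      · obtain ⟨a, l, hl⟩ := List.exists_cons_of_ne_nil hne
        exact ⟨a, l.map RLetter.Y, by rw [hl, List.map_cons]⟩
      · rw [numBlocks_map_of_sameDir (fun _ _ => rfl) hne]
        omega
      · simpa using (length_leadingX_le r).trans hn.le
    simpa only [condensed_map_Y_iff hne, List.reverse_reverse] using hblock
  exact (condensed_iff_condensed_append hX).trans <|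
    (and_congr (h r hr) hsub).trans (condensed_iff_condensed_append hX).symm

theorem trir_of_append {m n : ℕ} {u v s s' : List A} (hX : AgreeCond (BoundedX m n) u v)
    (h : trir m n (s ++ u) (s' ++ v)) : trir m n u v := by
  rw [← tril_reverse] at h ⊢
  simp only [List.reverse_append] at h
  refine tril_of_append (fun r hr => ?_) h
  rw [← condensed_map_swap_reverse, ← condensed_map_swap_reverse (w := v.reverse),
    List.reverse_reverse, List.reverse_reverse]
  exact hX _ (boundedX_map_swap.2 hr)

theorem mem_iff_of_trir {m n : ℕ} {u v : List A} (h : trir (m + 1) (n + 1) u v) (a : A) :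
    a ∈ u ↔ a ∈ v := by
  have hX := h [RLetter.X a] (uRX_iff.2 (Or.inl ⟨⟨a, [], rfl⟩, by simp [numBlocks], by simp⟩))
  exact condensed_singleton_iff.symm.trans (hX.trans condensed_singleton_iff)

section FirstLetter

variable {m n : ℕ} {a : A} {u u₀ u₁ v v₀ v₁ : List A}

theorem tril_left_of_splitsAt (hu : SplitsAt (RLetter.X a) u u₀ u₁)
    (hv : SplitsAt (RLetter.X a) v v₀ v₁) (h : trir (m + 1) (n + 1) u v) : tril m n u₀ v₀ := by
  obtain ⟨hX, hl⟩ := trir_succ_succ_iff.1 h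
  rw [hu.eq, hv.eq] at hl
  refine tril_of_append ?_ hl
  rintro _ ⟨⟨b, t, rfl⟩, hm, hn⟩
  have hcons := hX (RLetter.X a :: RLetter.Y b :: t)
    ⟨⟨a, _, rfl⟩, by rw [numBlocks_X_cons_Y]; omega, by simpa using hn⟩
  rwa [condensed_cons_cons_iff hu, condensed_cons_cons_iff hv] at hcons

theorem trir_right_of_splitsAt (hu : SplitsAt (RLetter.X a) u u₀ u₁)
    (hv : SplitsAt (RLetter.X a) v v₀ v₁) (h : trir (m + 1) (n + 1) u v) :
    trir (m + 1) n u₁ v₁ := by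
  have h' : trir (m + 1) n ((u₀ ++ [a]) ++ u₁) ((v₀ ++ [a]) ++ v₁) := by
    simpa [hu.eq, hv.eq, RLetter.letter] using trir_of_le n.le_succ h
  refine trir_of_append ?_ h'
  rintro _ ⟨⟨b, t, rfl⟩, hm, hn⟩
  have hcons := (trir_succ_succ_iff.1 h).1 (RLetter.X a :: RLetter.X b :: t)
    ⟨⟨a, _, rfl⟩, by rwa [numBlocks_X_cons_X], by simpa using hn⟩
  rwa [condensed_cons_cons_iff hu, condensed_cons_cons_iff hv] at hcons

theorem condensed_iff_of_splitsAt (hu : SplitsAt (RLetter.X a) u u₀ u₁)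
    (hv : SplitsAt (RLetter.X a) v v₀ v₁) (hl : tril m n u₀ v₀) (hr : trir (m + 1) n u₁ v₁)
    {t : List (RLetter A)} (ht : BoundedX (m + 1) (n + 1) (RLetter.X a :: t)) :
    Condensed u (RLetter.X a :: t) ↔ Condensed v (RLetter.X a :: t) := by
  obtain ⟨-, hm, hn⟩ := ht
  match t with
  | [] => simp only [condensed_singleton_iff, hu.mem, hv.mem]
  | RLetter.X b :: t =>
    rw [condensed_cons_cons_iff hu, condensed_cons_cons_iff hv]
    rw [numBlocks_X_cons_X] at hm
    exact hr _ (uRX_iff.2 (Or.inl ⟨⟨b, t, rfl⟩, hm, by simpa using hn⟩))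
  | RLetter.Y b :: t =>
    rw [condensed_cons_cons_iff hu, condensed_cons_cons_iff hv]
    rw [numBlocks_X_cons_Y] at hm
    exact hl _ (uRY_iff.2 (Or.inl ⟨⟨b, t, rfl⟩, by omega, by simpa using hn⟩))

end FirstLetter

/-! ### Congruence -/

/-- A relation on words that is compatible with appending and with prepending a letter. -/
def LetterCompatible {α : Type*} (R : List α → List α → Prop) : Prop :=
  ∀ u v, R u v → ∀ b, R (u ++ [b]) (v ++ [b]) ∧ R (b :: u) (b :: v)

theorem LetterCompatible.append_left_right {α : Type*} {R : List α → List α → Prop}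
    (hR : LetterCompatible R) (u v w : List α) (h : R u v) :
    R (u ++ w) (v ++ w) ∧ R (w ++ u) (w ++ v) := by
  constructor
  · induction w generalizing u v with
    | nil => simpa using h
    | cons b w ih => simpa using ih _ _ (hR u v h b).1
  · induction w with
    | nil => exact h
    | cons b w ih => exact (hR _ _ ih b).2

theorem letterCompatible_tril {m n : ℕ} (h : LetterCompatible (trir (A := A) m n)) :
    LetterCompatible (tril (A := A) m n) := by
  intro u v huv b
  obtain ⟨happend, hprepend⟩ := h _ _ (trir_reverse.2 huv) b
  constructor
  · rw [← trir_reverse]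
    simpa using hprepend
  · rw [← trir_reverse]
    simpa using happend

theorem trir_append_singleton {m n : ℕ} {u v : List A}
    (htrir : LetterCompatible (trir (A := A) (m + 1) n))
    (htril : LetterCompatible (tril (A := A) m n)) (h : trir (m + 1) (n + 1) u v) (b : A) :
    trir (m + 1) (n + 1) (u ++ [b]) (v ++ [b]) := by
  have hl : tril m n u v := (trir_succ_succ_iff.1 h).2
  refine trir_succ_succ_iff.2 ⟨?_, (htril u v hl b).1⟩
  intro r hr
  obtain ⟨a, t, rfl⟩ := hr.1
  have hmem := mem_iff_of_trir h a
  by_cases hau : a ∈ u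
  · obtain ⟨u₀, u₁, hu⟩ := exists_splitsAt (z := RLetter.X a) hau
    obtain ⟨v₀, v₁, hv⟩ := exists_splitsAt (z := RLetter.X a) (hmem.1 hau)
    exact condensed_iff_of_splitsAt (hu.append_right [b]) (hv.append_right [b])
      (tril_left_of_splitsAt hu hv h) (htrir _ _ (trir_right_of_splitsAt hu hv h) b).1 hr
  have hav : a ∉ v := mt hmem.2 hau
  by_cases hab : a = b
  · subst hab
    exact condensed_iff_of_splitsAt ⟨rfl, hau⟩ ⟨rfl, hav⟩ hl (fun _ _ => Iff.rfl) hr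
  · refine iff_of_false (mt letter_mem_of_condensed ?_) (mt letter_mem_of_condensed ?_) <;>
      simpa [RLetter.letter, hab]

theorem trir_cons {m n : ℕ} {u v : List A} (htril : LetterCompatible (tril (A := A) m n))
    (h : trir (m + 1) (n + 1) u v) (b : A) : trir (m + 1) (n + 1) (b :: u) (b :: v) := by
  have hl : tril m n u v := (trir_succ_succ_iff.1 h).2
  refine trir_succ_succ_iff.2 ⟨?_, (htril u v hl b).2⟩
  intro r hr
  obtain ⟨a, t, rfl⟩ := hr.1
  have hmem := mem_iff_of_trir h a
  by_cases hab : a = b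
  · subst hab
    exact condensed_iff_of_splitsAt ⟨List.nil_append _, List.not_mem_nil⟩
      ⟨List.nil_append _, List.not_mem_nil⟩ (fun _ _ => Iff.rfl) (trir_of_le n.le_succ h) hr
  by_cases hau : a ∈ u
  · obtain ⟨u₀, u₁, hu⟩ := exists_splitsAt (z := RLetter.X a) hau
    obtain ⟨v₀, v₁, hv⟩ := exists_splitsAt (z := RLetter.X a) (hmem.1 hau)
    exact condensed_iff_of_splitsAt (hu.cons hab) (hv.cons hab)
      (htril _ _ (tril_left_of_splitsAt hu hv h) b).2 (trir_right_of_splitsAt hu hv h) hr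
  · have hav : a ∉ v := mt hmem.2 hau
    refine iff_of_false (mt letter_mem_of_condensed ?_) (mt letter_mem_of_condensed ?_) <;>
      simpa [RLetter.letter, hab]

theorem letterCompatible_trir (m n : ℕ) : LetterCompatible (trir (A := A) m n) := by
  induction n generalizing m with
  | zero => exact fun _ _ _ _ => ⟨trir_zero_right _ _ _, trir_zero_right _ _ _⟩
  | succ n ih =>
    cases m with
    | zero => exact fun _ _ _ _ => ⟨trir_zero_left _ _ _, trir_zero_left _ _ _⟩
    | succ m =>
      have htril := letterCompatible_tril (ih m)
      exact fun _ _ h b => ⟨trir_append_singleton (ih (m + 1)) htril h b, trir_cons htril h b⟩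

/-! ### Finite index -/

theorem agreeCond_equivalence (R : List (RLetter A) → Prop) :
    Equivalence fun u v : List A => AgreeCond R u v :=
  ⟨fun _ _ _ => Iff.rfl, fun h r hr => (h r hr).symm,
    fun huv hvw r hr => (huv r hr).trans (hvw r hr)⟩

theorem exists_finset_forall_apply_eq {α β : Type*} [Finite β] (f : α → β) :
    ∃ S : Finset α, ∀ x, ∃ y ∈ S, f x = f y := by
  have hfin : (Set.range (Set.rangeSplitting f)).Finite := Set.finite_range _
  exact ⟨hfin.toFinset, fun x => ⟨Set.rangeSplitting f ⟨f x, x, rfl⟩,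
    hfin.mem_toFinset.2 (Set.mem_range_self _), (Set.apply_rangeSplitting f ⟨f x, x, rfl⟩).symm⟩⟩

theorem finite_rLetter (α : Type*) [Finite α] : Finite (RLetter α) := by
  refine Finite.of_surjective (Sum.elim RLetter.X RLetter.Y : α ⊕ α → RLetter α) ?_
  rintro (a | a)
  · exact ⟨Sum.inl a, rfl⟩
  · exact ⟨Sum.inr a, rfl⟩

theorem exists_finset_forall_agreeCond [Finite A] {R : List (RLetter A) → Prop} {n : ℕ}
    (hR : ∀ r, R r → r.length ≤ n) :
    ∃ S : Finset (List A), ∀ u, ∃ v ∈ S, AgreeCond R u v := by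
  have := finite_rLetter A
  have hfin : Finite {r : List (RLetter A) | r.length ≤ n} := List.finite_length_le _ n
  obtain ⟨S, hS⟩ := exists_finset_forall_apply_eq
    fun u : List A => {r : {r : List (RLetter A) | r.length ≤ n} | Condensed u r}
  refine ⟨S, fun u => ?_⟩
  obtain ⟨v, hv, huv⟩ := hS u
  exact ⟨v, hv, fun r hr => Set.ext_iff.1 huv ⟨r, hR r hr⟩⟩

/-- For `n ≥ m ≥ 1`, `⊳_{m,n}` and `⊲_{m,n}` are finite-index
congruences on `A*`. -/
theorem statement9 [Fintype A] (m n : ℕ) (hm : 1 ≤ m) (hmn : m ≤ n) :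
    Equivalence (fun u v : List A => trir m n u v) ∧
    Equivalence (fun u v : List A => tril m n u v) ∧
    (∃ S : Finset (List A), ∀ u : List A, ∃ v ∈ S, trir m n u v) ∧
    (∃ S : Finset (List A), ∀ u : List A, ∃ v ∈ S, tril m n u v) ∧
    (∀ u v : List A, trir m n u v → ∀ b : A,
        trir m n (u ++ [b]) (v ++ [b]) ∧ trir m n (b :: u) (b :: v)) ∧
    (∀ u v w : List A, trir m n u v →
        trir m n (u ++ w) (v ++ w) ∧ trir m n (w ++ u) (w ++ v)) ∧
    (∀ u v : List A, tril m n u v → ∀ b : A,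
        tril m n (u ++ [b]) (v ++ [b]) ∧ tril m n (b :: u) (b :: v)) ∧
    (∀ u v w : List A, tril m n u v →
        tril m n (u ++ w) (v ++ w) ∧ tril m n (w ++ u) (w ++ v)) := by
  have htrir : LetterCompatible (trir (A := A) m n) := letterCompatible_trir m n
  have htril : LetterCompatible (tril (A := A) m n) := letterCompatible_tril htrir
  exact ⟨agreeCond_equivalence _, agreeCond_equivalence _,
    exists_finset_forall_agreeCond fun _ => length_le_of_uRX,
    exists_finset_forall_agreeCond fun _ => length_le_of_uRY,
    htrir, htrir.append_left_right, htril, htril.append_left_right⟩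

end RankerPaper
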